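/- Let M be a structure equipped with a BP'-rank rk, let N be an elementary extension of M, and let S be an M-definable set of degree 1. Then the canonical extension S* of S to N has degree 1 with respect to the canonical extension of rk: there is no N-definable subset T of S* such that both T and S* \ T have rank equal to rk(S). More generally, the degree of any M-definable set is unaltered by canonical extension. -/

import Mathlib

/-!
The canonical extension of a definable condition is given by the same formula, so a statement
that is first order over `M` holds in `M` exactly when it holds in `N`. The point is that
"`S` can be partitioned into `d` nonempty definable sets of rank `rk S`, the pieces being members
of prescribed uniformly definable families" is such a statement (`transfers_isFiberPartition`).
Nonemptiness, disjointness and covering are plainly first order. For the rank condition,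
definability of rank provides formulas defining `{b | rk (S_b) = q}` in `M`, and `transfers_rk`
shows that in `N` the same formulas define `{b | rk* (S_b) = q}`: by monotonicity only finitely
many values `q` occur in a family, so the finite disjunction of these formulas holds of every
index in `M`, hence of every index in `N`.

Consequently `S` and `S*` have partitions of full rank into the same numbers of pieces
(`isRankPartition_canonExt_iff`), which is the equality of degrees. If `S` has degree 1, then a set
`T ⊆ S*` such that `T` and `S* \ T` both have rank `rk S` would give a partition of `S*` into two
pieces, and so one of `S`.
-/

open FirstOrder FirstOrder.Language Set Cardinal

universe u v w

namespace BP

variable {L : FirstOrder.Language.{u, v}} {M : Type w} [L.Structure M]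

/-- A rank function on a structure `M`: it assigns to every subset of a finite Cartesian
power of `M` a value in `WithBot ℕ`, where by convention the empty set gets `⊥ = -∞`,
and every nonempty parametrically definable set gets a natural number value. -/
structure RankFunction (L : FirstOrder.Language.{u, v}) (M : Type w) [L.Structure M] where
  rk : ∀ {n : ℕ}, Set (Fin n → M) → WithBot ℕ
  rk_empty : ∀ n : ℕ, rk (∅ : Set (Fin n → M)) = ⊥
  rk_ne_bot : ∀ {n : ℕ} (A : Set (Fin n → M)),
    Set.Definable (Set.univ : Set M) L A → A.Nonempty → rk A ≠ ⊥

/-- The member `S_b = φ[M, b]` of the uniformly definable family given by the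
parameter-free formula `φ(x, y)`, at the parameter tuple `b`. -/
def fiber {n m : ℕ} (φ : L.Formula (Fin n ⊕ Fin m)) (b : Fin m → M) : Set (Fin n → M) :=
  {x | φ.Realize (Sum.elim x b)}

namespace RankFunction

/-- Axiom 1.1 (weak monotonicity): `rk (A ∪ B) = max (rk A) (rk B)`. -/
def Axiom1_1 (r : RankFunction L M) : Prop :=
  ∀ {n : ℕ} (A B : Set (Fin n → M)),
    Set.Definable (Set.univ : Set M) L A → Set.Definable (Set.univ : Set M) L B →
      r.rk (A ∪ B) = max (r.rk A) (r.rk B)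

/-- Axiom 1.2 (finite degree): if `A` contains infinitely many pairwise disjoint nonempty
definable subsets each of rank at least `n`, then `rk A ≥ n + 1`. -/
def Axiom1_2 (r : RankFunction L M) : Prop :=
  ∀ {k : ℕ} (A : Set (Fin k → M)), Set.Definable (Set.univ : Set M) L A →
    ∀ n : ℕ,
      (∃ P : ℕ → Set (Fin k → M),
          (∀ i, Set.Definable (Set.univ : Set M) L (P i)) ∧ (∀ i, (P i).Nonempty) ∧
          (∀ i, P i ⊆ A) ∧ (Pairwise fun i j => Disjoint (P i) (P j)) ∧
          ∀ i, (n : WithBot ℕ) ≤ r.rk (P i)) →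
        ((n + 1 : ℕ) : WithBot ℕ) ≤ r.rk A

/-- Axiom 1 (monotonicity of rank): `rk A ≥ n + 1` iff `A` contains infinitely many pairwise
disjoint nonempty definable subsets each of rank at least `n`. -/
def Axiom1 (r : RankFunction L M) : Prop :=
  ∀ {k : ℕ} (A : Set (Fin k → M)), Set.Definable (Set.univ : Set M) L A →
    ∀ n : ℕ,
      (((n + 1 : ℕ) : WithBot ℕ) ≤ r.rk A ↔
        ∃ P : ℕ → Set (Fin k → M),
          (∀ i, Set.Definable (Set.univ : Set M) L (P i)) ∧ (∀ i, (P i).Nonempty) ∧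
          (∀ i, P i ⊆ A) ∧ (Pairwise fun i j => Disjoint (P i) (P j)) ∧
          ∀ i, (n : WithBot ℕ) ≤ r.rk (P i))

/-- Axiom 2 (definability of rank), relative to a parameter set `C`: for every uniformly
definable family `{S_b}` and every `k`, the set `{b | rk (S_b) = k}` is `C`-definable. -/
def Axiom2 (r : RankFunction L M) (C : Set M) : Prop :=
  ∀ {n m : ℕ} (φ : L.Formula (Fin n ⊕ Fin m)) (k : ℕ),
    Set.Definable C L {b : Fin m → M | r.rk (fiber φ b) = (k : WithBot ℕ)}

/-- Axiom 3 (additivity of rank): if `f` is a definable function from `A` onto `B` all of whose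
fibers have rank `n`, then `rk A = rk B + n`. -/
def Axiom3 (r : RankFunction L M) : Prop :=
  ∀ {k l : ℕ} (A : Set (Fin k → M)) (B : Set (Fin l → M))
    (f : (Fin k → M) → (Fin l → M)),
    Set.Definable (Set.univ : Set M) L A → Set.Definable (Set.univ : Set M) L B →
    Set.Definable (Set.univ : Set M) L
      {z : (Fin k ⊕ Fin l) → M | z ∘ Sum.inl ∈ A ∧ f (z ∘ Sum.inl) = z ∘ Sum.inr} →
    Set.MapsTo f A B → Set.SurjOn f A B →
    ∀ n : ℕ, (∀ b ∈ B, r.rk (A ∩ f ⁻¹' {b}) = (n : WithBot ℕ)) →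
      r.rk A = r.rk B + (n : WithBot ℕ)

/-- Axiom 4 (elimination of infinite quantifiers): for every uniformly definable family
`{S_b}` there is an integer `m₀` such that every `S_b` with at least `m₀` elements is
infinite (i.e. every finite `S_b` has fewer than `m₀` elements). -/
def Axiom4 (r : RankFunction L M) : Prop :=
  ∀ {n m : ℕ} (φ : L.Formula (Fin n ⊕ Fin m)), ∃ m₀ : ℕ,
    ∀ (b : Fin m → M) (h : (fiber φ b).Finite), h.toFinset.card < m₀

/-- `A` can be partitioned into `d` pairwise disjoint nonempty definable subsets, each of
the same rank as `A`. -/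
def IsRankPartition (r : RankFunction L M) {k : ℕ} (A : Set (Fin k → M)) (d : ℕ) : Prop :=
  ∃ P : Fin d → Set (Fin k → M),
    (∀ i, Set.Definable (Set.univ : Set M) L (P i)) ∧ (∀ i, (P i).Nonempty) ∧
    (∀ i, r.rk (P i) = r.rk A) ∧ (Pairwise fun i j => Disjoint (P i) (P j)) ∧
    (⋃ i, P i) = A

/-- `A` has degree `d`: it can be partitioned into `d` pairwise disjoint nonempty definable
pieces of full rank, but not into more. -/
def HasDegree (r : RankFunction L M) {k : ℕ} (A : Set (Fin k → M)) (d : ℕ) : Prop :=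
  r.IsRankPartition A d ∧ ∀ d' : ℕ, r.IsRankPartition A d' → d' ≤ d

/-- `A` has finite degree. -/
def HasFiniteDegree (r : RankFunction L M) {k : ℕ} (A : Set (Fin k → M)) : Prop :=
  ∃ d : ℕ, r.HasDegree A d

/-- The degree approximation property over `C`: in any uniformly definable family indexed by a
nonempty `C`-definable set, some member has finite degree. -/
def DegreeApprox (r : RankFunction L M) (C : Set M) : Prop :=
  ∀ {n m : ℕ} (A : Set (Fin m → M)), Set.Definable C L A → A.Nonempty →
    ∀ φ : L.Formula (Fin n ⊕ Fin m), ∃ a₀ ∈ A, r.HasFiniteDegree (fiber φ a₀)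

/-- The splitting approximation property over `C`: in any uniformly definable family of
infinite sets indexed by a nonempty `C`-definable set, some member `S_b` contains a definable
subset of rank `rk (S_b) - 1`. -/
def SplittingApprox (r : RankFunction L M) (C : Set M) : Prop :=
  ∀ {n m : ℕ} (B : Set (Fin m → M)), Set.Definable C L B → B.Nonempty →
    ∀ φ : L.Formula (Fin n ⊕ Fin m), (∀ b ∈ B, (fiber φ b).Infinite) →
      ∃ b ∈ B, ∃ S' : Set (Fin n → M), Set.Definable (Set.univ : Set M) L S' ∧
        S' ⊆ fiber φ b ∧ r.rk S' + 1 = r.rk (fiber φ b)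

/-- A `BP'`-rank (relative to `C`): Axioms 1.1, 1.2, 2 (over `C`), and 4. -/
def IsBP'Rank (r : RankFunction L M) (C : Set M) : Prop :=
  r.Axiom1_1 ∧ r.Axiom1_2 ∧ r.Axiom2 C ∧ r.Axiom4

/-- A `BP₀'`-rank relative to `C`: Axiom 1.1, the degree approximation property over `C`,
Axiom 2 over `C`, and Axiom 4. -/
def IsBP0'Rank (r : RankFunction L M) (C : Set M) : Prop :=
  r.Axiom1_1 ∧ r.DegreeApprox C ∧ r.Axiom2 C ∧ r.Axiom4

/-- A `BP`-rank: Axioms 1, 2, 3, and 4. -/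
def IsBPRank (r : RankFunction L M) : Prop :=
  r.Axiom1 ∧ r.Axiom2 Set.univ ∧ r.Axiom3 ∧ r.Axiom4

/-- A `BP₀`-rank relative to `C`: Axiom 1.1, degree approximation and splitting approximation
over `C`, Axiom 2 over `C`, Axiom 3, and Axiom 4. -/
def IsBP0Rank (r : RankFunction L M) (C : Set M) : Prop :=
  r.Axiom1_1 ∧ r.DegreeApprox C ∧ r.SplittingApprox C ∧ r.Axiom2 C ∧ r.Axiom3 ∧ r.Axiom4

/-- Generic indistinguishability: `x₁ ~ x₂` for `R` on `S` iff the set of `x ∈ S` where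
`R x₁ x` and `R x₂ x` disagree has rank strictly less than the rank of `S`. -/
def GenIndist (r : RankFunction L M) {k : ℕ} (S : Set (Fin k → M))
    (R : (Fin k → M) → (Fin k → M) → Prop) (x₁ x₂ : Fin k → M) : Prop :=
  r.rk {x | x ∈ S ∧ ¬(R x₁ x ↔ R x₂ x)} < r.rk S

/-- `A ≡ B`: the rank of the symmetric difference of `A` and `B` is strictly less than the
rank of their union. -/
def RkEquiv (r : RankFunction L M) {k : ℕ} (A B : Set (Fin k → M)) : Prop :=
  r.rk (symmDiff A B) < r.rk (A ∪ B)

end RankFunction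

open RankFunction

/-- The canonical extension relation: `S ⊆ N^k` gets rank `n` if `S` is a member, at a
parameter `b*` in the canonical extension of the index set, of a uniformly definable family
indexed by an `M`-definable set on whose `M`-points the rank is constantly `n`. -/
def CanonExtRank {N : Type w} [L.Structure N] (r : RankFunction L M) (_f : M ↪ₑ[L] N)
    {k : ℕ} (S : Set (Fin k → N)) (n : WithBot ℕ) : Prop :=
  ∃ (m l : ℕ) (φ : L.Formula (Fin k ⊕ Fin m)) (ψ : L.Formula (Fin m ⊕ Fin l))
    (c : Fin l → M),
    (∀ b : Fin m → M, ψ.Realize (Sum.elim b c) → r.rk (fiber φ b) = n) ∧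
    ∃ b' : Fin m → N, ψ.Realize (Sum.elim b' (_f ∘ c)) ∧ S = fiber φ b'

/-- `r'` is the canonical extension of `r` along the elementary embedding `f`. -/
def IsCanonExt {N : Type w} [L.Structure N] (r : RankFunction L M) (f : M ↪ₑ[L] N)
    (r' : RankFunction L N) : Prop :=
  ∀ {k : ℕ} (S : Set (Fin k → N)) (n : WithBot ℕ), CanonExtRank r f S n → r'.rk S = n

/-- A theory has the order property if some formula `φ(x̄; ȳ)` linearly orders pairs of
sequences of tuples in some model. -/
def HasOrderProperty (L : FirstOrder.Language.{0, 0}) (T : L.Theory) : Prop :=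
  ∃ (n m : ℕ) (φ : L.Formula (Fin n ⊕ Fin m)) (N : Theory.ModelType.{0, 0, 0} T)
    (a : ℕ → Fin n → N) (b : ℕ → Fin m → N),
    ∀ i j : ℕ, (φ.Realize (Sum.elim (a i) (b j)) ↔ i < j)

/-- A theory is stable if no formula has the order property. -/
def IsStableTheory (L : FirstOrder.Language.{0, 0}) (T : L.Theory) : Prop :=
  ¬ HasOrderProperty L T

/-- A theory is superstable if it is stable in every cardinal `κ ≥ 2 ^ ℵ₀`: over every
parameter set of size at most `κ` in a model, there are at most `κ` complete 1-types. -/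
def IsSuperstableTheory (L : FirstOrder.Language.{0, 0}) (T : L.Theory) : Prop :=
  ∀ κ : Cardinal.{0}, 2 ^ Cardinal.aleph0 ≤ κ →
    ∀ (N : Theory.ModelType.{0, 0, 0} T) (A : Set N), #A ≤ κ →
      #(((L[[A]]).completeTheory N).CompleteType (Fin 1)) ≤ κ

/-! ### Transfer of definable conditions along an elementary embedding -/

/-- The condition `P` on `β`-tuples of `M` and the condition `Q` on `β`-tuples of `N` are given
by one and the same formula with parameters in `M`, i.e. `Q` is the canonical extension of the
`M`-definable set `P`. Every element of `M` is available as a parameter: the variables of the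
formula are `M ⊕ β`, those in `M` being interpreted by themselves in `M` and through `f`
in `N`. -/
def Transfers {N : Type w} [L.Structure N] (f : M ↪ₑ[L] N) {β : Type}
    (P : (β → M) → Prop) (Q : (β → N) → Prop) : Prop :=
  ∃ χ : L.Formula (M ⊕ β), (∀ b, χ.Realize (Sum.elim id b) ↔ P b) ∧
    ∀ b, χ.Realize (Sum.elim f b) ↔ Q b

section Transfer

variable {N : Type w} [L.Structure N] {f : M ↪ₑ[L] N} {β : Type}

theorem Transfers.not {P : (β → M) → Prop} {Q : (β → N) → Prop} (h : Transfers f P Q) :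
    Transfers f (fun b => ¬ P b) (fun b => ¬ Q b) := by
  obtain ⟨χ, h1, h2⟩ := h
  exact ⟨∼χ, fun b => by rw [Formula.realize_not, h1], fun b => by rw [Formula.realize_not, h2]⟩

theorem Transfers.and {P P' : (β → M) → Prop} {Q Q' : (β → N) → Prop} (h : Transfers f P Q)
    (h' : Transfers f P' Q') : Transfers f (fun b => P b ∧ P' b) (fun b => Q b ∧ Q' b) := by
  obtain ⟨χ, h1, h2⟩ := h
  obtain ⟨χ', hP, hQ⟩ := h'
  exact ⟨χ ⊓ χ', fun b => by rw [Formula.realize_inf, h1, hP],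
    fun b => by rw [Formula.realize_inf, h2, hQ]⟩

theorem Transfers.iff {P P' : (β → M) → Prop} {Q Q' : (β → N) → Prop} (h : Transfers f P Q)
    (h' : Transfers f P' Q') : Transfers f (fun b => P b ↔ P' b) (fun b => Q b ↔ Q' b) := by
  obtain ⟨χ, h1, h2⟩ := h
  obtain ⟨χ', hP, hQ⟩ := h'
  exact ⟨χ.iff χ', fun b => by rw [Formula.realize_iff, h1, hP],
    fun b => by rw [Formula.realize_iff, h2, hQ]⟩

/-- Closure under finite conjunctions. -/
theorem Transfers.iInf {ι : Type*} [Finite ι] {P : ι → (β → M) → Prop} {Q : ι → (β → N) → Prop}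
    (h : ∀ i, Transfers f (P i) (Q i)) :
    Transfers f (fun b => ∀ i, P i b) (fun b => ∀ i, Q i b) := by
  choose χ h1 h2 using h
  exact ⟨Formula.iInf χ, fun b => by simp only [Formula.realize_iInf, h1],
    fun b => by simp only [Formula.realize_iInf, h2]⟩

/-- Closure under finite disjunctions. -/
theorem Transfers.iSup {ι : Type*} [Finite ι] {P : ι → (β → M) → Prop} {Q : ι → (β → N) → Prop}
    (h : ∀ i, Transfers f (P i) (Q i)) :
    Transfers f (fun b => ∃ i, P i b) (fun b => ∃ i, Q i b) := by
  choose χ h1 h2 using h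
  exact ⟨Formula.iSup χ, fun b => by simp only [Formula.realize_iSup, h1],
    fun b => by simp only [Formula.realize_iSup, h2]⟩

/-- Closure under substitution of variables. -/
theorem Transfers.comp {γ : Type} {P : (β → M) → Prop} {Q : (β → N) → Prop}
    (h : Transfers f P Q) (g : β → γ) :
    Transfers f (fun b => P (b ∘ g)) (fun b => Q (b ∘ g)) := by
  obtain ⟨χ, h1, h2⟩ := h
  refine ⟨χ.relabel (Sum.map id g), fun b => ?_, fun b => ?_⟩
  · rw [Formula.realize_relabel, Sum.elim_comp_map, Function.comp_id, h1]
  · rw [Formula.realize_relabel, Sum.elim_comp_map, Function.comp_id, h2]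

/-- Closure under existential quantification over a finite tuple. -/
theorem Transfers.ex {κ : Type} [Finite κ] {P : (β → M) → (κ → M) → Prop}
    {Q : (β → N) → (κ → N) → Prop}
    (h : Transfers f (β := β ⊕ κ) (fun v => P (v ∘ Sum.inl) (v ∘ Sum.inr))
      (fun v => Q (v ∘ Sum.inl) (v ∘ Sum.inr))) :
    Transfers f (fun b => ∃ x, P b x) (fun b => ∃ x, Q b x) := by
  obtain ⟨χ, h1, h2⟩ := h
  refine ⟨(χ.relabel (Equiv.sumAssoc M β κ).symm).iExs κ, fun b => ?_, fun b => ?_⟩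
  · rw [Formula.realize_iExs]
    refine exists_congr fun x => ?_
    have : χ.Realize (Sum.elim id (Sum.elim b x)) ↔ P b x := h1 (Sum.elim b x)
    rw [← this, Formula.realize_relabel]
    refine iff_of_eq (congrArg _ ?_)
    ext (i | i | i) <;> rfl
  · rw [Formula.realize_iExs]
    refine exists_congr fun x => ?_
    have : χ.Realize (Sum.elim f (Sum.elim b x)) ↔ Q b x := h2 (Sum.elim b x)
    rw [← this, Formula.realize_relabel]
    refine iff_of_eq (congrArg _ ?_)
    ext (i | i | i) <;> rfl

/-- Closure under universal quantification over a finite tuple. -/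
theorem Transfers.all {κ : Type} [Finite κ] {P : (β → M) → (κ → M) → Prop}
    {Q : (β → N) → (κ → N) → Prop}
    (h : Transfers f (β := β ⊕ κ) (fun v => P (v ∘ Sum.inl) (v ∘ Sum.inr))
      (fun v => Q (v ∘ Sum.inl) (v ∘ Sum.inr))) :
    Transfers f (fun b => ∀ x, P b x) (fun b => ∀ x, Q b x) := by
  have := (Transfers.ex (P := fun b x => ¬ P b x) (Q := fun b x => ¬ Q b x) h.not).not
  simpa only [not_exists, not_not] using this

/-- Membership in a fiber of `θ`, both the point and the index being variables. -/
theorem Transfers.mem_fiber {n m : ℕ} (θ : L.Formula (Fin n ⊕ Fin m)) (g : Fin n → β)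
    (g' : Fin m → β) :
    Transfers f (fun b => b ∘ g ∈ fiber θ (b ∘ g')) (fun b => b ∘ g ∈ fiber θ (b ∘ g')) := by
  refine ⟨θ.relabel (Sum.inr ∘ Sum.elim g g'), fun b => ?_, fun b => ?_⟩ <;>
  · rw [Formula.realize_relabel]
    refine iff_of_eq (congrArg _ ?_)
    ext (i | i) <;> rfl

/-- Membership in a fiber of `θ` at a fixed index from `M`. -/
theorem Transfers.mem_fiber_const {n m : ℕ} (θ : L.Formula (Fin n ⊕ Fin m)) (g : Fin n → β)
    (c : Fin m → M) :
    Transfers f (fun b => b ∘ g ∈ fiber θ c) (fun b => b ∘ g ∈ fiber θ (f ∘ c)) := by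
  refine ⟨θ.relabel (Sum.elim (Sum.inr ∘ g) (Sum.inl ∘ c)), fun b => ?_, fun b => ?_⟩ <;>
  · rw [Formula.realize_relabel]
    refine iff_of_eq (congrArg _ ?_)
    ext (i | i) <;> rfl

/-- Elementarity: corresponding conditions agree on tuples from `M`. -/
theorem Transfers.map_iff {P : (β → M) → Prop} {Q : (β → N) → Prop} (h : Transfers f P Q)
    (b : β → M) : Q (f ∘ b) ↔ P b := by
  obtain ⟨χ, h1, h2⟩ := h
  rw [← h1, ← h2, ← f.map_formula χ, Sum.comp_elim, Function.comp_id]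

/-- Elementarity: corresponding conditions are solvable in `M` or `N` simultaneously. -/
theorem Transfers.exists_iff [Finite β] {P : (β → M) → Prop} {Q : (β → N) → Prop}
    (h : Transfers f P Q) : (∃ b, P b) ↔ ∃ b, Q b :=
  ((Transfers.ex (β := Empty) (P := fun _ x => P x) (Q := fun _ x => Q x)
    (h.comp Sum.inr)).map_iff Empty.elim).symm

end Transfer

/-! ### Definable sets as members of uniformly definable families -/

/-- A formula whose variables are split into parameters `α` and a finite tuple only uses finitely
many of the parameters. -/
theorem exists_finite_params {α : Type*} {m : ℕ} (χ : L.Formula (α ⊕ Fin m)) :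
    ∃ (l : ℕ) (ψ : L.Formula (Fin m ⊕ Fin l)) (g : Fin l → α),
      ∀ {K : Type w} [L.Structure K] (u : α → K) (b : Fin m → K),
        ψ.Realize (Sum.elim b (u ∘ g)) ↔ χ.Realize (Sum.elim u b) := by
  classical
  let s := χ.freeVarFinset.toLeft
  let e : s ≃ Fin s.card := s.equivFin
  refine ⟨s.card, χ.restrictFreeVar fun x => Sum.casesOn x.1
    (fun a ha => Sum.inr (e ⟨a, by simpa [s] using ha⟩)) (fun j _ => Sum.inl j) x.2,
    fun i => (e.symm i : α), fun u b => ?_⟩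
  refine BoundedFormula.realize_restrictFreeVar _ ?_
  rintro ⟨a | j, ha⟩ <;> simp

theorem definable_fiber {n m : ℕ} (θ : L.Formula (Fin n ⊕ Fin m)) (b : Fin m → M) :
    Set.Definable (Set.univ : Set M) L (fiber θ b) := by
  rw [Set.definable_iff_exists_formula_sum]
  refine ⟨θ.relabel (Sum.elim Sum.inr fun j => Sum.inl ⟨b j, trivial⟩), ?_⟩
  ext x
  change θ.Realize _ ↔ (θ.relabel _).Realize _
  rw [Formula.realize_relabel]
  refine iff_of_eq (congrArg _ ?_)
  ext (i | i) <;> rfl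

theorem exists_eq_fiber {n : ℕ} {A : Set (Fin n → M)}
    (hA : Set.Definable (Set.univ : Set M) L A) :
    ∃ (m : ℕ) (θ : L.Formula (Fin n ⊕ Fin m)) (b : Fin m → M), A = fiber θ b := by
  rw [Set.definable_iff_exists_formula_sum] at hA
  obtain ⟨χ, rfl⟩ := hA
  obtain ⟨l, ψ, g, h⟩ := exists_finite_params χ
  exact ⟨l, ψ, Subtype.val ∘ g, Set.ext fun x => (h _ x).symm⟩

/-! ### Transfer of the rank -/

section Rank

variable {N : Type w} [L.Structure N] {f : M ↪ₑ[L] N} {r : RankFunction L M}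
  {r' : RankFunction L N}

theorem rk_mono (h1 : r.Axiom1_1) {n : ℕ} {A B : Set (Fin n → M)}
    (hA : Set.Definable (Set.univ : Set M) L A) (hB : Set.Definable (Set.univ : Set M) L B)
    (hAB : A ⊆ B) : r.rk A ≤ r.rk B := by
  have := h1 A B hA hB
  rw [Set.union_eq_self_of_subset_left hAB] at this
  rw [this]
  exact le_max_left _ _

/-- Definability of rank, including the value `⊥`, which is taken exactly at the empty fibers. -/
theorem exists_formula_rk (h2 : r.Axiom2 Set.univ) {n m : ℕ} (φ : L.Formula (Fin n ⊕ Fin m))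
    (q : WithBot ℕ) :
    ∃ χ : L.Formula (M ⊕ Fin m), ∀ b, χ.Realize (Sum.elim id b) ↔ r.rk (fiber φ b) = q := by
  induction q with
  | bot =>
    obtain ⟨χ, h, -⟩ := (Transfers.ex (f := ElementaryEmbedding.refl L M) (β := Fin m)
      (P := fun b x => x ∈ fiber φ b) (Q := fun b x => x ∈ fiber φ b)
      (Transfers.mem_fiber φ Sum.inr Sum.inl)).not
    refine ⟨χ, fun b => (h b).trans ⟨fun hb => ?_, fun hb hne => ?_⟩⟩
    · rw [Set.not_nonempty_iff_eq_empty.1 hb, r.rk_empty]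
    · exact r.rk_ne_bot _ (definable_fiber φ b) hne hb
  | coe k =>
    obtain ⟨χ, hχ⟩ := Set.definable_iff_exists_formula_sum.1 (h2 φ k)
    refine ⟨χ.relabel (Sum.map Subtype.val id), fun b => ?_⟩
    rw [Formula.realize_relabel, Sum.elim_comp_map]
    exact (Set.ext_iff.1 hχ b).symm

/-- The set of indices of a given rank extends canonically to the set of indices of the same
extended rank. The formula defining it in `M` implies the extended rank by the definition of the
canonical extension; conversely, since only the finitely many ranks below that of the ambient
power occur, every index in `N` satisfies the formula for one of them. -/
theorem transfers_rk (h1 : r.Axiom1_1) (h2 : r.Axiom2 Set.univ) (hr' : IsCanonExt r f r')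
    {n m : ℕ} (φ : L.Formula (Fin n ⊕ Fin m)) (q : WithBot ℕ) :
    Transfers f (fun b => r.rk (fiber φ b) = q) (fun b => r'.rk (fiber φ b) = q) := by
  choose χ hχ using exists_formula_rk h2 φ
  have key : ∀ q b, (χ q).Realize (Sum.elim f b) → r'.rk (fiber φ b) = q := by
    intro q b hb
    obtain ⟨l, ψ, g, h⟩ := exists_finite_params (χ q)
    exact hr' _ _ ⟨m, l, φ, ψ, g, fun b₀ hb₀ => (hχ q b₀).1 ((h id b₀).1 hb₀),
      b, (h f b).2 hb, rfl⟩
  refine ⟨χ q, hχ q, fun b => ⟨key q b, ?_⟩⟩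
  rintro rfl
  have hfin : Finite (Set.Iic (r.rk (Set.univ : Set (Fin n → M)))) := Set.finite_Iic _
  have htr : Transfers f
      (fun b : Fin m → M => ¬ ∃ q : Set.Iic (r.rk (Set.univ : Set (Fin n → M))),
        (χ q).Realize (Sum.elim id b))
      (fun b : Fin m → N => ¬ ∃ q : Set.Iic (r.rk (Set.univ : Set (Fin n → M))),
        (χ q).Realize (Sum.elim f b)) :=
    (Transfers.iSup (ι := Set.Iic (r.rk (Set.univ : Set (Fin n → M))))
      (P := fun q b => (χ q).Realize (Sum.elim id b))
      (Q := fun q b => (χ q).Realize (Sum.elim f b)) fun q => ⟨χ q, fun _ => Iff.rfl, fun _ => Iff.rfl⟩).not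
  by_contra hb
  obtain ⟨b₀, hb₀⟩ := htr.exists_iff.2 ⟨b, fun ⟨q, hq⟩ => hb (by rwa [key q b hq])⟩
  exact hb₀ ⟨⟨r.rk (fiber φ b₀), rk_mono h1 (definable_fiber φ b₀) Set.definable_univ
    (Set.subset_univ _)⟩, (hχ _ b₀).2 rfl⟩

/-! ### Transfer of partitions -/

/-- The positions of the `i`-th tuple in the concatenation of tuples of lengths `m i`. -/
abbrev block {d : ℕ} (m : Fin d → ℕ) (i : Fin d) (j : Fin (m i)) : Σ i, Fin (m i) := ⟨i, j⟩

/-- The fibers of the formulas `θ i` at the indices `b i` form a partition of `A` into nonempty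
sets of rank `q`; the indices are collected in a single tuple. -/
def IsFiberPartition (r : RankFunction L M) {k d : ℕ} {m : Fin d → ℕ}
    (θ : ∀ i, L.Formula (Fin k ⊕ Fin (m i))) (A : Set (Fin k → M)) (q : WithBot ℕ)
    (b : (Σ i, Fin (m i)) → M) : Prop :=
  (∀ i, ∃ x, x ∈ fiber (θ i) (b ∘ block m i)) ∧
  (∀ i, r.rk (fiber (θ i) (b ∘ block m i)) = q) ∧
  (∀ p : {p : Fin d × Fin d // p.1 ≠ p.2},
    ∀ x, ¬ (x ∈ fiber (θ p.1.1) (b ∘ block m p.1.1) ∧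
      x ∈ fiber (θ p.1.2) (b ∘ block m p.1.2))) ∧
  ∀ x, (∃ i, x ∈ fiber (θ i) (b ∘ block m i)) ↔ x ∈ A

theorem isRankPartition_iff (r : RankFunction L M) {k : ℕ} (A : Set (Fin k → M)) (d : ℕ) :
    r.IsRankPartition A d ↔ ∃ (m : Fin d → ℕ) (θ : ∀ i, L.Formula (Fin k ⊕ Fin (m i))),
      ∃ b, IsFiberPartition r θ A (r.rk A) b := by
  constructor
  · rintro ⟨P, hdef, hne, hrk, hdis, hun⟩
    choose m θ b hb using fun i => exists_eq_fiber (hdef i)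
    obtain rfl : P = fun i => fiber (θ i) (b i) := funext hb
    refine ⟨m, θ, fun x => b x.1 x.2, hne, hrk,
      fun p x hx => Set.disjoint_left.1 (hdis p.2) hx.1 hx.2, fun x => ?_⟩
    rw [← Set.mem_iUnion]
    exact Set.ext_iff.1 hun x
  · rintro ⟨m, θ, b, hne, hrk, hdis, hun⟩
    refine ⟨fun i => fiber (θ i) (b ∘ block m i), fun i => definable_fiber _ _, hne, hrk,
      fun i j hij => Set.disjoint_left.2 fun x hx hx' => hdis ⟨(i, j), hij⟩ x ⟨hx, hx'⟩,
      Set.ext fun x => ?_⟩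
    rw [Set.mem_iUnion]
    exact hun x

theorem transfers_isFiberPartition (h1 : r.Axiom1_1) (h2 : r.Axiom2 Set.univ)
    (hr' : IsCanonExt r f r') {k d l : ℕ} {m : Fin d → ℕ}
    (θ : ∀ i, L.Formula (Fin k ⊕ Fin (m i))) (φ : L.Formula (Fin k ⊕ Fin l)) (c : Fin l → M)
    (q : WithBot ℕ) :
    Transfers f (IsFiberPartition r θ (fiber φ c) q)
      (IsFiberPartition r' θ (fiber φ (f ∘ c)) q) := by
  have hmem : ∀ i, Transfers f (β := (Σ i, Fin (m i)) ⊕ Fin k)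
      (fun v => v ∘ Sum.inr ∈ fiber (θ i) ((v ∘ Sum.inl) ∘ block m i))
      (fun v => v ∘ Sum.inr ∈ fiber (θ i) ((v ∘ Sum.inl) ∘ block m i)) :=
    fun i => Transfers.mem_fiber (θ i) Sum.inr (Sum.inl ∘ block m i)
  refine Transfers.and (Transfers.iInf fun i => ?_) (Transfers.and (Transfers.iInf fun i => ?_)
    (Transfers.and (Transfers.iInf fun p => ?_) ?_))
  · exact Transfers.ex (P := fun b x => x ∈ fiber (θ i) (b ∘ block m i))
      (Q := fun b x => x ∈ fiber (θ i) (b ∘ block m i)) (hmem i)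
  · exact (transfers_rk h1 h2 hr' (θ i) q).comp (block m i)
  · exact Transfers.all
      (P := fun b x => ¬ (x ∈ fiber (θ p.1.1) (b ∘ block m p.1.1) ∧
        x ∈ fiber (θ p.1.2) (b ∘ block m p.1.2)))
      (Q := fun b x => ¬ (x ∈ fiber (θ p.1.1) (b ∘ block m p.1.1) ∧
        x ∈ fiber (θ p.1.2) (b ∘ block m p.1.2)))
      ((hmem p.1.1).and (hmem p.1.2)).not
  · exact Transfers.all
      (P := fun b x => (∃ i, x ∈ fiber (θ i) (b ∘ block m i)) ↔ x ∈ fiber φ c)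
      (Q := fun b x => (∃ i, x ∈ fiber (θ i) (b ∘ block m i)) ↔ x ∈ fiber φ (f ∘ c))
      ((Transfers.iSup hmem).iff (Transfers.mem_fiber_const φ Sum.inr c))

/-- The rank of an `M`-definable set is unaltered by canonical extension. -/
theorem canonExt_rk_eq (h1 : r.Axiom1_1) (h2 : r.Axiom2 Set.univ) (hr' : IsCanonExt r f r')
    {k m : ℕ} (φ : L.Formula (Fin k ⊕ Fin m)) (c : Fin m → M) :
    r'.rk (fiber φ (f ∘ c)) = r.rk (fiber φ c) :=
  ((transfers_rk h1 h2 hr' φ (r.rk (fiber φ c))).map_iff c).2 rfl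

/-- An `M`-definable set and its canonical extension admit partitions into the same numbers of
pieces of full rank. -/
theorem isRankPartition_canonExt_iff (h1 : r.Axiom1_1) (h2 : r.Axiom2 Set.univ)
    (hr' : IsCanonExt r f r') {k m : ℕ} (φ : L.Formula (Fin k ⊕ Fin m)) (c : Fin m → M) (d : ℕ) :
    r.IsRankPartition (fiber φ c) d ↔ r'.IsRankPartition (fiber φ (f ∘ c)) d := by
  rw [isRankPartition_iff, isRankPartition_iff, canonExt_rk_eq h1 h2 hr']
  exact exists_congr fun _ => exists_congr fun θ =>
    (transfers_isFiberPartition h1 h2 hr' θ φ c _).exists_iff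

end Rank

/-- Let `M` carry a BP'-rank `rk`, let `N` be an elementary extension of `M`,
and let `S = φ[M, c]` be an `M`-definable set.  If `S` has degree 1 then its canonical
extension `S* = φ[N, f ∘ c]` has degree 1 for the canonical extension of `rk`: there is no
`N`-definable `T ⊆ S*` with both `T` and `S* \ T` of rank `rk S`.  More generally, the degree
of any `M`-definable set is unaltered by canonical extension. -/
theorem canonExt_degree_unaltered (L : FirstOrder.Language.{u, v})
    (M : Type w) (N : Type w) [L.Structure M] [L.Structure N]
    (r : RankFunction L M) (h : r.IsBP'Rank (Set.univ : Set M))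
    (f : M ↪ₑ[L] N) (r' : RankFunction L N) (hr' : IsCanonExt r f r')
    {k m : ℕ} (φ : L.Formula (Fin k ⊕ Fin m)) (c : Fin m → M) :
    (r.HasDegree (fiber φ c) 1 →
      ¬ ∃ T : Set (Fin k → N), Set.Definable (Set.univ : Set N) L T ∧
        T ⊆ fiber φ (⇑f ∘ c) ∧ r'.rk T = r.rk (fiber φ c) ∧
        r'.rk (fiber φ (⇑f ∘ c) \ T) = r.rk (fiber φ c)) ∧
    (∀ d : ℕ, r.HasDegree (fiber φ c) d ↔ r'.HasDegree (fiber φ (⇑f ∘ c)) d) := by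
  obtain ⟨h1, -, h2, -⟩ := h
  have hpart := isRankPartition_canonExt_iff h1 h2 hr' φ c
  refine ⟨?_, fun d => by simp only [HasDegree, hpart]⟩
  rintro ⟨⟨P, -, hne, -, -, hun⟩, hmax⟩ ⟨T, hT, hTS, hrkT, hrkD⟩
  have hrk := canonExt_rk_eq h1 h2 hr' φ c
  have hbot : r.rk (fiber φ c) ≠ ⊥ :=
    r.rk_ne_bot _ (definable_fiber φ c) ((hne 0).mono (hun ▸ Set.subset_iUnion P 0))
  have hnonempty : ∀ A : Set (Fin k → N), r'.rk A = r.rk (fiber φ c) → A.Nonempty := by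
    intro A hA
    rw [Set.nonempty_iff_ne_empty]
    rintro rfl
    exact hbot (hA.symm.trans (r'.rk_empty k))
  have h2part : r'.IsRankPartition (fiber φ (f ∘ c)) 2 := by
    refine ⟨![T, fiber φ (f ∘ c) \ T], ?_, ?_, ?_, ?_, ?_⟩
    · exact Fin.forall_fin_two.2 ⟨hT, (definable_fiber φ _).sdiff hT⟩
    · exact Fin.forall_fin_two.2 ⟨hnonempty _ hrkT, hnonempty _ hrkD⟩
    · exact Fin.forall_fin_two.2 ⟨hrkT.trans hrk.symm, hrkD.trans hrk.symm⟩
    · have hd : Disjoint T (fiber φ (f ∘ c) \ T) := Set.disjoint_sdiff_right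
      intro i j hij
      fin_cases i <;> fin_cases j
      · exact absurd rfl hij
      · exact hd
      · exact hd.symm
      · exact absurd rfl hij
    · ext x
      simp only [Set.mem_iUnion, Fin.exists_fin_two]
      change x ∈ T ∪ fiber φ (f ∘ c) \ T ↔ _
      rw [Set.union_sdiff_cancel hTS]
  exact absurd (hmax 2 ((hpart 2).2 h2part)) (by norm_num)

end BP
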